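/- Suppose a and b are radical ideals, M is a faithful finitely generated R-module, and a ∼_{(0;M)} b. Then a ∼_{(0;R)} b, i.e., 0 :_R a = b and 0 :_R b = a. -/

import Mathlib

/-- The colon submodule `N :_M a = {m ∈ M | a m ⊆ N}`. -/
def Submodule.colonBy {R M : Type*} [CommRing R] [AddCommGroup M] [Module R M]
    (N : Submodule R M) (a : Ideal R) : Submodule R M :=
  ⨅ r ∈ a, N.comap (LinearMap.lsmul R M r)

theorem Submodule.mem_colonBy {R M : Type*} [CommRing R] [AddCommGroup M] [Module R M]
    {N : Submodule R M} {a : Ideal R} {m : M} : m ∈ N.colonBy a ↔ ∀ r ∈ a, r • m ∈ N := by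
  simp [Submodule.colonBy]

/-- An element multiplying a faithful finite module `M` into `b M` lies in the radical of `b`. -/
theorem Ideal.mem_radical_of_smul_mem_smul_top {R M : Type*} [CommRing R]
    [AddCommGroup M] [Module R M] [Module.Finite R M]
    (hfaithful : Module.annihilator R M = ⊥) {b : Ideal R} {x : R}
    (hx : ∀ m : M, x • m ∈ b • (⊤ : Submodule R M)) : x ∈ b.radical := by
  obtain ⟨p, hmonic, -, hcoeff, hp⟩ :=
    LinearMap.exists_monic_and_natDegree_eq_and_coeff_mem_pow_and_aeval_eq_zero R
      (algebraMap R (Module.End R M) x) b (by rintro _ ⟨m, rfl⟩; exact hx m)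
  have heval : p.eval x = 0 := by
    rw [Polynomial.aeval_algebraMap_apply] at hp
    have hann : p.eval x ∈ Module.annihilator R M :=
      Module.mem_annihilator.mpr fun m => by simpa using LinearMap.congr_fun hp m
    simpa [hfaithful] using hann
  refine ⟨p.natDegree, ?_⟩
  rw [Polynomial.eval_eq_sum_range, Finset.sum_range_succ, hmonic.coeff_natDegree, one_mul] at heval
  rw [eq_neg_of_add_eq_zero_right heval]
  refine b.neg_mem (b.sum_mem fun i hi => b.mul_mem_right _ ?_)
  exact Ideal.pow_le_self (Nat.sub_ne_zero_of_lt (Finset.mem_range.mp hi)) (hcoeff i)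

/-- If `0 :_M a = b M` with `M` finite and faithful and `b` radical, then `0 :_R a = b`. -/
theorem Ideal.colonBy_bot_eq_of_colonBy_bot_eq_smul_top {R M : Type*} [CommRing R]
    [AddCommGroup M] [Module R M] [Module.Finite R M]
    (hfaithful : Module.annihilator R M = ⊥) {a b : Ideal R} (hradb : b.IsRadical)
    (hab : (⊥ : Submodule R M).colonBy a = b • ⊤) : (⊥ : Ideal R).colonBy a = b := by
  ext x
  rw [Submodule.mem_colonBy]
  refine ⟨fun hx => hradb (Ideal.mem_radical_of_smul_mem_smul_top hfaithful fun m => ?_),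
    fun hx r hr => ?_⟩
  · rw [← hab, Submodule.mem_colonBy]
    intro r hr
    have hrx : r * x = 0 := hx r hr
    simp [smul_smul, hrx]
  · rw [← hfaithful, Module.mem_annihilator]
    intro m
    have hm : x • m ∈ (⊥ : Submodule R M).colonBy a :=
      hab ▸ Submodule.smul_mem_smul hx Submodule.mem_top
    rw [smul_assoc]
    exact Submodule.mem_colonBy.mp hm r hr

/-- If `a` and `b` are radical ideals, `M` is faithful and `a ∼_{(0;M)} b`,
then `a ∼_{(0;R)} b`. -/
theorem linked_ring_of_linked_faithful {R M : Type*} [CommRing R] [IsNoetherianRing R]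
    [AddCommGroup M] [Module R M] [Module.Finite R M]
    (a b : Ideal R) (hrada : a.IsRadical) (hradb : b.IsRadical)
    (ha : a ≠ ⊥) (ha' : a ≠ ⊤) (hb : b ≠ ⊥) (hb' : b ≠ ⊤)
    (hfaithful : Module.annihilator R M = ⊥)
    (hab : (⊥ : Submodule R M).colonBy a = b • ⊤ ∧ (⊥ : Submodule R M).colonBy b = a • ⊤)
    (haM : a • (⊤ : Submodule R M) ≠ ⊤) (hbM : b • (⊤ : Submodule R M) ≠ ⊤) :
    (⊥ : Ideal R).colonBy a = b ∧ (⊥ : Ideal R).colonBy b = a := by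
  exact ⟨Ideal.colonBy_bot_eq_of_colonBy_bot_eq_smul_top hfaithful hradb hab.1,
    Ideal.colonBy_bot_eq_of_colonBy_bot_eq_smul_top hfaithful hrada hab.2⟩
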